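/- Let F be a field of characteristic p > 0 and G a locally finite group whose derived subgroup G' = [G,G] is a p-group, and let FG denote the group algebra of G over F. Then for all g, h ∈ G, the element g·h − h·g of FG lies in the Jacobson radical J(FG); consequently the quotient ring FG/J(FG) is commutative. -/

import Mathlib

/-- A group is *locally finite* if every finitely generated subgroup is finite. -/
def IsLocallyFiniteGroup (G : Type*) [Group G] : Prop :=
  ∀ H : Subgroup G, H.FG → Finite H

/-!
Let `N` be a finite normal `p`-subgroup of `H` and let `R` be a ring in which `p` is nilpotent.
A simple `R[H]`-module `V` contains a nonzero vector fixed by `N`: the `N`-orbit of a nonzero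
vector spans a finite abelian group whose order is divisible by `p`, so `N` fixes more than the
zero vector in it. As `N` is normal, the `N`-fixed vectors form a submodule, which is then all
of `V`. Hence `n - 1` lies in `J(R[H])` for every `n ∈ N`, and so does
`gh - hg = ([g, h] - 1)hg` as soon as `[H, H]` is a finite `p`-group.

Membership of `x` in the radical of `R[G]` says that `1 + yx` is left invertible for each `y`,
which can be verified in `R[H]` for a finitely generated subgroup `H` supporting `x` and `y`.
-/

open MonoidAlgebra
open scoped commutatorElement

theorem prime_dvd_addOrderOf_of_pow_nsmul_eq_zero {V : Type*} [AddMonoid V] {p k : ℕ}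
    (hp : p.Prime) {v : V} (hv : v ≠ 0) (hpv : p ^ k • v = 0) : p ∣ addOrderOf v := by
  obtain ⟨j, -, hj⟩ := (Nat.dvd_prime_pow hp).1 (addOrderOf_dvd_of_nsmul_eq_zero hpv)
  have j_ne_zero : j ≠ 0 := by
    rintro rfl
    exact hv (AddMonoid.addOrderOf_eq_one_iff.1 (hj.trans (pow_zero p)))
  exact hj ▸ dvd_pow_self p j_ne_zero

section FixedPoints

variable {N V : Type*} [AddCommGroup V]

theorem smul_mem_closure_orbit [Monoid N] [DistribMulAction N V] (n : N) {v w : V}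
    (hw : w ∈ AddSubgroup.closure (MulAction.orbit N v)) :
    n • w ∈ AddSubgroup.closure (MulAction.orbit N v) := by
  suffices AddSubgroup.closure (MulAction.orbit N v) ≤
      (AddSubgroup.closure (MulAction.orbit N v)).comap (DistribSMul.toAddMonoidHom V n) from
    this hw
  rw [AddSubgroup.closure_le]
  exact fun u hu ↦ AddSubgroup.subset_closure (MulAction.mapsTo_smul_orbit n v hu)

theorem finite_closure_orbit [Monoid N] [DistribMulAction N V] [Finite N] {v : V}
    (hv : IsOfFinAddOrder v) :
    Finite (AddSubgroup.closure (MulAction.orbit N v)) := by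
  have orbit_finite : (MulAction.orbit N v).Finite := Set.finite_range _
  have : AddGroup.FG (AddSubgroup.closure (MulAction.orbit N v)) :=
    (AddGroup.fg_iff_addSubgroup_fg _).2 ⟨orbit_finite.toFinset, by simp⟩
  have closure_le_torsion :
      AddSubgroup.closure (MulAction.orbit N v) ≤ AddCommGroup.torsion V := by
    rw [AddSubgroup.closure_le]
    rintro _ ⟨n, rfl⟩
    exact (DistribSMul.toAddMonoidHom V n).isOfFinAddOrder hv
  exact AddCommGroup.finite_of_fg_isAddTorsion _ fun w ↦
    AddSubmonoid.isOfFinAddOrder_coe.1 (closure_le_torsion w.2)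

theorem exists_ne_zero_forall_smul_eq_of_isPGroup [Group N] [DistribMulAction N V] [Finite N]
    {p : ℕ} [Fact p.Prime] (hN : IsPGroup p N) {v : V} (hv : v ≠ 0) {k : ℕ}
    (hpv : p ^ k • v = 0) :
    ∃ w : V, w ≠ 0 ∧ ∀ n : N, n • w = w := by
  let W : SubMulAction N V :=
    { carrier := AddSubgroup.closure (MulAction.orbit N v)
      smul_mem' := fun n _ ↦ smul_mem_closure_orbit n }
  have v_finite : IsOfFinAddOrder v :=
    isOfFinAddOrder_iff_nsmul_eq_zero.2 ⟨p ^ k, pow_pos (Fact.out : p.Prime).pos k, hpv⟩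
  have : Finite W := finite_closure_orbit v_finite
  have p_dvd_card : p ∣ Nat.card W := by
    have v_mem : v ∈ AddSubgroup.closure (MulAction.orbit N v) :=
      AddSubgroup.subset_closure (MulAction.mem_orbit_self v)
    calc p ∣ addOrderOf v := prime_dvd_addOrderOf_of_pow_nsmul_eq_zero Fact.out hv hpv
      _ ∣ Nat.card W := AddSubgroup.addOrderOf_dvd_natCard _ v_mem
  let zeroW : W := ⟨0, zero_mem (AddSubgroup.closure _)⟩
  have zero_fixed : zeroW ∈ MulAction.fixedPoints N W :=
    fun n ↦ Subtype.ext (smul_zero n)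
  obtain ⟨w, w_fixed, w_ne⟩ :=
    hN.exists_fixed_point_of_prime_dvd_card_of_fixed_point W p_dvd_card zero_fixed
  exact ⟨w, fun h ↦ w_ne (Subtype.ext h.symm), fun n ↦ congrArg Subtype.val (w_fixed n)⟩

end FixedPoints

section NormalSubgroup

variable {R H V : Type*} [Ring R] [Group H] [AddCommGroup V] [Module R[H] V]

variable (R V) in
/-- The vectors of an `R[H]`-module fixed by a normal subgroup `N` of `H`. Normality makes them
an `R[H]`-submodule, whereas for a general subgroup they are not stable under `H`. -/
def fixedSubmodule (N : Subgroup H) [N.Normal] : Submodule R[H] V where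
  carrier := {v | ∀ n ∈ N, of R H n • v = v}
  add_mem' hv hw n hn := by rw [smul_add, hv n hn, hw n hn]
  zero_mem' _ _ := smul_zero _
  smul_mem' a v hv := by
    induction a using MonoidAlgebra.induction_linear with
    | zero => intro n _; rw [zero_smul, smul_zero]
    | add a b ha hb => intro n hn; rw [add_smul, smul_add, ha n hn, hb n hn]
    | single h c =>
      intro n hn
      have conj_mem : h⁻¹ * n * h ∈ N := by
        simpa using (inferInstance : N.Normal).conj_mem n hn h⁻¹
      have swap : of R H n * single h c = single h c * of R H (h⁻¹ * n * h) := by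
        simp [of_apply, single_mul_single, mul_assoc]
      rw [← mul_smul, swap, mul_smul, hv _ conj_mem]

variable {p : ℕ} [Fact p.Prime] {N : Subgroup H} [N.Normal] [Finite N]

theorem fixedSubmodule_ne_bot [Nontrivial V] (hp : IsNilpotent (p : R)) (hN : IsPGroup p N) :
    fixedSubmodule R V N ≠ ⊥ := by
  let _ : DistribMulAction N V := DistribMulAction.compHom V ((of R H).comp N.subtype)
  obtain ⟨k, hk⟩ : IsNilpotent (p : R[H]) := by
    simpa using hp.map (singleOneRingHom : R →+* R[H])
  obtain ⟨v, hv⟩ := exists_ne (0 : V)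
  have hpv : p ^ k • v = 0 := by
    rw [← Nat.cast_smul_eq_nsmul R[H], Nat.cast_pow, hk, zero_smul]
  obtain ⟨w, w_ne, w_fixed⟩ := exists_ne_zero_forall_smul_eq_of_isPGroup hN hv hpv
  exact (Submodule.ne_bot_iff _).2 ⟨w, fun n hn ↦ w_fixed ⟨n, hn⟩, w_ne⟩

theorem fixedSubmodule_eq_top [IsSimpleModule R[H] V] (hp : IsNilpotent (p : R))
    (hN : IsPGroup p N) : fixedSubmodule R V N = ⊤ :=
  have := IsSimpleModule.nontrivial R[H] V
  (eq_bot_or_eq_top _).resolve_left (fixedSubmodule_ne_bot hp hN)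

theorem of_sub_one_mem_jacobson (hp : IsNilpotent (p : R)) (hN : IsPGroup p N) {n : H}
    (hn : n ∈ N) : of R H n - 1 ∈ Ring.jacobson R[H] := by
  rw [Ring.jacobson_eq_sInf_isMaximal, Submodule.mem_sInf]
  intro m (hm : Ideal.IsMaximal m)
  have : IsSimpleModule R[H] (R[H] ⧸ m) := isSimpleModule_iff_isCoatom.2 hm.out
  have one_fixed : (Submodule.Quotient.mk 1 : R[H] ⧸ m) ∈ fixedSubmodule R (R[H] ⧸ m) N :=
    fixedSubmodule_eq_top (V := R[H] ⧸ m) hp hN ▸ Submodule.mem_top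
  have n_smul_one : (Submodule.Quotient.mk (of R H n • 1) : R[H] ⧸ m) = Submodule.Quotient.mk 1 :=
    one_fixed n hn
  simpa only [smul_eq_mul, mul_one] using (Submodule.Quotient.eq m).1 n_smul_one

end NormalSubgroup

theorem of_mul_of_sub_of_mul_of {R G : Type*} [Ring R] [Group G] (g h : G) :
    of R G g * of R G h - of R G h * of R G g = (of R G ⁅g, h⁆ - 1) * of R G (h * g) := by
  rw [sub_mul, one_mul, ← map_mul, ← map_mul, ← map_mul, commutatorElement_def]
  simp only [mul_assoc, inv_mul_cancel_left, inv_mul_cancel, mul_one]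

theorem of_mul_of_sub_mem_jacobson_of_finite_commutator {R H : Type*} [Ring R] [Group H] {p : ℕ}
    [Fact p.Prime] (hp : IsNilpotent (p : R)) [Finite (commutator H)]
    (hH : IsPGroup p (commutator H)) (g h : H) :
    of R H g * of R H h - of R H h * of R H g ∈ Ring.jacobson R[H] := by
  have commutator_mem : ⁅g, h⁆ ∈ commutator H :=
    Subgroup.commutator_mem_commutator (Subgroup.mem_top g) (Subgroup.mem_top h)
  rw [of_mul_of_sub_of_mul_of]
  exact Ideal.mul_mem_right _ _ (of_sub_one_mem_jacobson hp hH commutator_mem)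

theorem mem_jacobson_of_forall_exists_subring {A : Type*} [Ring A] {x : A}
    (hx : ∀ y : A, ∃ S : Subring A, y ∈ S ∧ ∃ x' ∈ Ring.jacobson S, (x' : A) = x) :
    x ∈ Ring.jacobson A := by
  rw [← Ideal.jacobson_bot, Ideal.mem_jacobson_iff]
  intro y
  obtain ⟨S, hy, x', hx', rfl⟩ := hx y
  rw [← Ideal.jacobson_bot, Ideal.mem_jacobson_iff] at hx'
  obtain ⟨z, hz⟩ := hx' ⟨y, hy⟩
  exact ⟨z, congrArg Subtype.val hz⟩

theorem mem_range_mapDomainRingHom {R M N : Type*} [Ring R] [Monoid M] [Monoid N] {f : M →* N}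
    (hf : Function.Injective f) {y : R[N]} (hy : (y.coeff.support : Set N) ⊆ Set.range f) :
    y ∈ (mapDomainRingHom R f).range :=
  ⟨_, mapDomain_comapDomain hy hf⟩

theorem of_mul_of_sub_mem_jacobson_of_forall_fg {R G : Type*} [Ring R] [Group G]
    (hG : ∀ H : Subgroup G, H.FG → ∀ g h : H,
      of R H g * of R H h - of R H h * of R H g ∈ Ring.jacobson R[H]) (g h : G) :
    of R G g * of R G h - of R G h * of R G g ∈ Ring.jacobson R[G] := by
  classical
  refine mem_jacobson_of_forall_exists_subring fun y ↦ ?_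
  let T : Finset G := y.coeff.support ∪ {g, h}
  let H : Subgroup G := Subgroup.closure T
  have T_subset : (T : Set G) ⊆ H := Subgroup.subset_closure
  have y_support : (y.coeff.support : Set G) ⊆ Set.range H.subtype :=
    fun t ht ↦ ⟨⟨t, T_subset (Finset.mem_union_left _ ht)⟩, rfl⟩
  let g' : H := ⟨g, T_subset (by simp [T])⟩
  let h' : H := ⟨h, T_subset (by simp [T])⟩
  let φ : R[H] →+* R[G] := mapDomainRingHom R H.subtype
  have : RingHomSurjective φ.rangeRestrict := ⟨φ.rangeRestrict_surjective⟩
  refine ⟨φ.range, mem_range_mapDomainRingHom H.subtype_injective y_support, _,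
    Ring.le_comap_jacobson φ.rangeRestrict (hG H ⟨T, rfl⟩ g' h'), ?_⟩
  simp [φ, g', h']

theorem isPGroup_commutator_subgroup {G : Type*} [Group G] {p : ℕ}
    (hG : IsPGroup p (commutator G)) (H : Subgroup G) : IsPGroup p (commutator H) := by
  have commutator_le : commutator H ≤ (commutator G).subgroupOf H := by
    rw [Subgroup.subgroupOf, ← Subgroup.map_le_iff_le_comap, H.map_subtype_commutator]
    exact Subgroup.commutator_mono le_top le_top
  exact hG.comap_subtype.to_le commutator_le

theorem commute_map_of_forall_commute_map_of {R M A : Type*} [CommSemiring R] [Monoid M]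
    [Semiring A] (φ : R[M] →+* A)
    (hφ : ∀ g h : M, Commute (φ (of R M g)) (φ (of R M h))) (a b : R[M]) :
    Commute (φ a) (φ b) := by
  have scalar_commute (r : R) (x : R[M]) : Commute (φ (algebraMap R R[M] r)) (φ x) :=
    (Algebra.commute_algebraMap_left r x).map φ
  induction a using MonoidAlgebra.induction_on with
  | add a a' ha ha' => rw [map_add]; exact ha.add_left ha'
  | smul r a ha =>
    rw [Algebra.smul_def, map_mul]
    exact (scalar_commute r b).mul_left ha
  | of g =>
    induction b using MonoidAlgebra.induction_on with
    | add b b' hb hb' => rw [map_add]; exact hb.add_right hb'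
    | smul r b hb =>
      rw [Algebra.smul_def, map_mul]
      exact (scalar_commute r _).symm.mul_right hb
    | of h => exact hφ g h

theorem mem_jacobson_bot_iff_mem_ring_jacobson {A : Type*} [Ring A] {x : A} :
    x ∈ TwoSidedIdeal.jacobson (⊥ : TwoSidedIdeal A) ↔ x ∈ Ring.jacobson A := by
  rw [TwoSidedIdeal.mem_jacobson_iff, ← Ideal.jacobson_bot, Ideal.mem_jacobson_iff]
  simp only [TwoSidedIdeal.mem_bot, Ideal.mem_bot]

theorem commutators_mem_jacobson_and_quotient_commutative_general
    {R G : Type*} [CommRing R] [Group G] {p : ℕ} [Fact p.Prime] (hp : IsNilpotent (p : R))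
    (hG : ∀ H : Subgroup G, H.FG → Finite (commutator H)) (hG' : IsPGroup p (commutator G)) :
    (∀ g h : G,
        of R G g * of R G h - of R G h * of R G g ∈
          TwoSidedIdeal.jacobson (⊥ : TwoSidedIdeal R[G])) ∧
      ∀ x y : (TwoSidedIdeal.jacobson (⊥ : TwoSidedIdeal R[G])).ringCon.Quotient,
        x * y = y * x := by
  let J : TwoSidedIdeal R[G] := TwoSidedIdeal.jacobson ⊥
  have of_commutators_mem (g h : G) : of R G g * of R G h - of R G h * of R G g ∈ J := by
    refine mem_jacobson_bot_iff_mem_ring_jacobson.2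
      (of_mul_of_sub_mem_jacobson_of_forall_fg (fun H hH ↦ ?_) g h)
    have := hG H hH
    exact of_mul_of_sub_mem_jacobson_of_finite_commutator hp (isPGroup_commutator_subgroup hG' H)
  have of_commute (g h : G) : Commute (J.ringCon.mk' (of R G g)) (J.ringCon.mk' (of R G h)) :=
    (RingCon.eq _).2 ((TwoSidedIdeal.rel_iff _ _ _).2 (of_commutators_mem g h))
  refine ⟨of_commutators_mem, fun x y ↦ ?_⟩
  obtain ⟨a, rfl⟩ := J.ringCon.mk'_surjective x
  obtain ⟨b, rfl⟩ := J.ringCon.mk'_surjective y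
  exact commute_map_of_forall_commute_map_of J.ringCon.mk' of_commute a b

/-- Let `F` be a field of characteristic `p > 0` and `G` a locally finite group whose derived
subgroup `[G, G]` is a `p`-group. Then for all `g, h ∈ G` the element `g·h - h·g` of the
group algebra `F[G]` lies in the Jacobson radical `J(F[G])`; consequently the quotient ring
`F[G] / J(F[G])` is commutative. -/
theorem commutators_mem_jacobson_and_quotient_commutative
    {F G : Type*} [Field F] [Group G] (p : ℕ) (hp : 0 < p) [CharP F p]
    (hG : IsLocallyFiniteGroup G) (hG' : IsPGroup p (commutator G)) :
    (∀ g h : G,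
        MonoidAlgebra.of F G g * MonoidAlgebra.of F G h -
            MonoidAlgebra.of F G h * MonoidAlgebra.of F G g ∈
          TwoSidedIdeal.jacobson (⊥ : TwoSidedIdeal (MonoidAlgebra F G))) ∧
      ∀ x y :
          (TwoSidedIdeal.jacobson (⊥ : TwoSidedIdeal (MonoidAlgebra F G))).ringCon.Quotient,
        x * y = y * x := by
  have : Fact p.Prime := ⟨(CharP.char_is_prime_or_zero F p).resolve_right hp.ne'⟩
  exact commutators_mem_jacobson_and_quotient_commutative_general
    (CharP.cast_eq_zero F p ▸ IsNilpotent.zero) (fun H hH ↦ have := hG H hH; inferInstance) hG'
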